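/- arXiv:1812.04409 — 5 statements merged into one kernel-verified Lean document; each statement's English description precedes it below -/
import Mathlib

section
/- Let j : ℝ → ℝ be a continuously differentiable function with j(t) > 0 for all t ∈ ℝ, and suppose there is a constant a > 0 such that |j'(t)| ≤ a·j(t) for all t ∈ ℝ. Define u(t) = j'(t)/j(t). Then limsup_{T→+∞} (1/T)·log √(j(T)² + j'(T)²) = limsup_{T→+∞} (1/T)·∫₀^T u(t) dt. -/
open Filter Real

/-!
Since `u = j'/j` is the derivative of `log |j|`,
`log √(j(T)² + j'(T)²) = ∫₀ᵀ u + log |j(0)| + ½ log (1 + u(T)²)`.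
When `u` is bounded, the last two terms stay bounded, so they disappear after division by `T` and
the two quotients have the same `limsup`. A bounded `u` is integrable on compact intervals because
derivatives are measurable. (`Real.log x` means `log |x|` for `x < 0`.)
-/

open scoped Interval Topology

theorem limsup_add_of_tendsto {ι R : Type*} [AddCommGroup R] [ConditionallyCompleteLinearOrder R]
    [DenselyOrdered R] [AddLeftMono R] [TopologicalSpace R] [OrderTopology R]
    {l : Filter ι} [NeBot l] {f g : ι → R} {c : R}
    (hf_le : l.IsBoundedUnder (· ≤ ·) f) (hf_ge : l.IsBoundedUnder (· ≥ ·) f)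
    (hg : Tendsto g l (𝓝 c)) :
    limsup (f + g) l = limsup f l + c := by
  apply le_antisymm
  · simpa only [hg.limsup_eq] using limsup_add_le hf_ge hf_le
      hg.isBoundedUnder_ge.isCoboundedUnder_le hg.isBoundedUnder_le
  · simpa only [hg.liminf_eq] using le_limsup_add hf_le hf_ge.isCoboundedUnder_le
      hg.isBoundedUnder_le hg.isBoundedUnder_ge

theorem tendsto_div_zero_of_abs_le_of_tendsto_atTop {ι 𝕜 : Type*} [Field 𝕜] [LinearOrder 𝕜]
    [IsStrictOrderedRing 𝕜] [TopologicalSpace 𝕜] [OrderTopology 𝕜] {l : Filter ι} {f g : ι → 𝕜}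
    {C : 𝕜} (hf : ∀ᶠ i in l, |f i| ≤ C) (hg : Tendsto g l atTop) :
    Tendsto (fun i => f i / g i) l (𝓝 0) := by
  simpa only [div_eq_mul_inv, Pi.inv_apply] using bdd_le_mul_tendsto_zero' C hf hg.inv_tendsto_atTop

theorem abs_integral_div_sub_le {f : ℝ → ℝ} {a b C : ℝ} (hab : a ≠ b)
    (hC : ∀ t ∈ Ι a b, |f t| ≤ C) : |(∫ t in a..b, f t) / (b - a)| ≤ C := by
  rw [abs_div, div_le_iff₀ (abs_pos.2 (sub_ne_zero.2 hab.symm))]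
  exact intervalIntegral.norm_integral_le_of_norm_le_const (f := f) hC

theorem integral_deriv_eq_sub_of_norm_deriv_le {E : Type*} [NormedAddCommGroup E]
    [NormedSpace ℝ E] [CompleteSpace E] {f : ℝ → E} {a b C : ℝ}
    (hf : ∀ t ∈ [[a, b]], DifferentiableAt ℝ f t) (hC : ∀ t ∈ Ι a b, ‖deriv f t‖ ≤ C) :
    ∫ t in a..b, deriv f t = f b - f a := by
  refine intervalIntegral.integral_deriv_eq_sub hf ?_
  refine (intervalIntegrable_const (c := C)).mono_fun' (aestronglyMeasurable_deriv f _) ?_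
  exact MeasureTheory.ae_restrict_of_forall_mem measurableSet_uIoc hC

theorem log_sqrt_sq_add_sq {x : ℝ} (hx : x ≠ 0) (y : ℝ) :
    log √(x ^ 2 + y ^ 2) = log x + log (1 + (y / x) ^ 2) / 2 := by
  have hfactor : x ^ 2 + y ^ 2 = x ^ 2 * (1 + (y / x) ^ 2) := by field_simp
  rw [log_sqrt (by positivity), hfactor, log_mul (by positivity) (by positivity), log_pow]
  push_cast
  ring

section LogarithmicDerivative

variable {f : ℝ → ℝ} {a b C : ℝ}

theorem integral_deriv_div_eq_log_sub_log
    (hf : ∀ t ∈ [[a, b]], DifferentiableAt ℝ f t) (hf0 : ∀ t ∈ [[a, b]], f t ≠ 0)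
    (hC : ∀ t ∈ Ι a b, |deriv f t / f t| ≤ C) :
    ∫ t in a..b, deriv f t / f t = log (f b) - log (f a) := by
  have hderiv : ∀ t ∈ [[a, b]], deriv (fun s => log (f s)) t = deriv f t / f t :=
    fun t ht => deriv.log (hf t ht) (hf0 t ht)
  rw [← intervalIntegral.integral_congr hderiv]
  refine integral_deriv_eq_sub_of_norm_deriv_le (fun t ht => (hf t ht).log (hf0 t ht))
    (C := C) fun t ht => ?_
  rw [hderiv t (Set.uIoc_subset_uIcc ht)]
  exact hC t ht

theorem log_sqrt_sq_add_deriv_sq_eq_integral_add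
    (hf : ∀ t ∈ [[a, b]], DifferentiableAt ℝ f t) (hf0 : ∀ t ∈ [[a, b]], f t ≠ 0)
    (hC : ∀ t ∈ Ι a b, |deriv f t / f t| ≤ C) :
    log √(f b ^ 2 + deriv f b ^ 2) =
      (∫ t in a..b, deriv f t / f t) + (log (f a) + log (1 + (deriv f b / f b) ^ 2) / 2) := by
  rw [log_sqrt_sq_add_sq (hf0 b Set.right_mem_uIcc), integral_deriv_div_eq_log_sub_log hf hf0 hC]
  ring

end LogarithmicDerivative

theorem abs_log_one_add_sq_le {x a : ℝ} (hx : |x| ≤ a) :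
    |log (1 + x ^ 2)| ≤ log (1 + a ^ 2) := by
  have hsq : x ^ 2 ≤ a ^ 2 := sq_le_sq.2 (hx.trans (le_abs_self a))
  rw [abs_of_nonneg (log_nonneg (le_add_of_nonneg_right (sq_nonneg x)))]
  gcongr

theorem tendsto_const_add_log_one_add_sq_div_atTop {u : ℝ → ℝ} {a : ℝ}
    (hu : ∀ᶠ T in atTop, |u T| ≤ a) (c : ℝ) :
    Tendsto (fun T => (c + log (1 + u T ^ 2) / 2) / T) atTop (𝓝 0) := by
  refine tendsto_div_zero_of_abs_le_of_tendsto_atTop (C := |c| + log (1 + a ^ 2) / 2) ?_ tendsto_id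
  filter_upwards [hu] with T hT
  calc |c + log (1 + u T ^ 2) / 2| ≤ |c| + |log (1 + u T ^ 2)| / 2 := by
        simpa only [abs_div, abs_two] using abs_add_le c (log (1 + u T ^ 2) / 2)
    _ ≤ |c| + log (1 + a ^ 2) / 2 := by
        gcongr
        exact abs_log_one_add_sq_le hT

theorem lyapunov_exponent_eq_limsup_riccati_general
    (j : ℝ → ℝ) (hj : ∀ t, 0 ≤ t → DifferentiableAt ℝ j t)
    (hj0 : ∀ t, 0 ≤ t → j t ≠ 0)
    (a : ℝ) (hbound : ∀ t, 0 ≤ t → |deriv j t| ≤ a * |j t|) :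
    limsup (fun T : ℝ => log √(j T ^ 2 + deriv j T ^ 2) / T) atTop
      = limsup (fun T : ℝ => (∫ t in (0 : ℝ)..T, deriv j t / j t) / T) atTop := by
  have hu : ∀ t, 0 ≤ t → |deriv j t / j t| ≤ a := fun t ht => by
    rw [abs_div, div_le_iff₀ (abs_pos.2 (hj0 t ht))]
    exact hbound t ht
  have huIoc : ∀ T, 0 ≤ T → ∀ t ∈ Ι 0 T, |deriv j t / j t| ≤ a := fun T hT t ht =>
    hu t (Set.uIoc_of_le hT ▸ ht).1.le
  have havg : ∀ᶠ T in atTop, |(∫ t in (0 : ℝ)..T, deriv j t / j t) / T| ≤ a := by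
    filter_upwards [eventually_gt_atTop 0] with T hT
    simpa only [sub_zero] using abs_integral_div_sub_le hT.ne (huIoc T hT.le)
  obtain ⟨havg_le, havg_ge⟩ := isBoundedUnder_le_abs.1 (isBoundedUnder_of_eventually_le havg)
  have herror := tendsto_const_add_log_one_add_sq_div_atTop
    ((eventually_ge_atTop 0).mono hu) (log (j 0))
  refine (limsup_congr ?_).trans <|
    (limsup_add_of_tendsto havg_le havg_ge herror).trans (add_zero _)
  filter_upwards [eventually_ge_atTop 0] with T hT
  have hnonneg : ∀ t ∈ [[0, T]], 0 ≤ t := fun t ht => (Set.uIcc_of_le hT ▸ ht).1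
  rw [Pi.add_apply, ← add_div, log_sqrt_sq_add_deriv_sq_eq_integral_add
    (fun t ht => hj t (hnonneg t ht)) (fun t ht => hj0 t (hnonneg t ht)) (huIoc T hT)]

/-- For a `C¹` positive function `j` with `|j'| ≤ a·j`, the exponential growth
rate of `√(j(T)² + j'(T)²)` equals the limsup of the time averages of
`u = j'/j`. -/
theorem lyapunov_exponent_eq_limsup_riccati
    (j : ℝ → ℝ) (hj : ContDiff ℝ 1 j)
    (hpos : ∀ t, 0 < j t)
    (a : ℝ) (ha : 0 < a)
    (hbound : ∀ t, |deriv j t| ≤ a * j t) :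
    limsup (fun T : ℝ =>
        Real.log (Real.sqrt ((j T) ^ 2 + (deriv j T) ^ 2)) / T) atTop
      = limsup (fun T : ℝ =>
        (∫ t in (0:ℝ)..T, deriv j t / j t) / T) atTop := by
  exact lyapunov_exponent_eq_limsup_riccati_general j
    (fun t _ => hj.differentiable one_ne_zero t) (fun t _ => (hpos t).ne') a
    fun t _ => (abs_of_pos (hpos t)).symm ▸ hbound t
end

section
/- For every δ > 0 and σ > 0 there exists a constant c > 0, depending only on δ and σ, with the following property: if t₀ ∈ ℝ, u : ℝ → ℝ is differentiable on [t₀, t₀+σ], K : ℝ → ℝ is a function with u'(t) = −u(t)² − K(t) for all t ∈ [t₀, t₀+σ], u(t) ≤ 0 for all t ∈ [t₀, t₀+σ], and K(t) ≤ −δ for all t ∈ [t₀, t₀+σ], then u(t₀) ≤ −c. -/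
open Set

/-!
If `u` and `v` are Riccati solutions for curvatures `K ≤ L`, then their difference satisfies the
linear differential inequality `(u - v)' ≥ -(u + v) (u - v)`, so an integrating factor carries
the inequality `u ≤ v` from the right endpoint of an interval to the left one. The solution `v`
for the constant curvature `-δ` that vanishes at time `t₀ + σ` is
`t ↦ -√δ tanh (√δ (t₀ + σ - t))`, which gives the sharp constant `c = √δ tanh (√δ σ)`.
-/

open Real

theorem exists_hasDerivAt_of_continuousOn_Icc {p : ℝ → ℝ} {a b : ℝ} (hab : a ≤ b)
    (hp : ContinuousOn p (Icc a b)) :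
    ∃ P : ℝ → ℝ, ∀ t ∈ Icc a b, HasDerivAt P (p t) t := by
  let q : ℝ → ℝ := IccExtend hab ((Icc a b).domRestrict p)
  have hq : Continuous q := hp.domRestrict.Icc_extend'
  refine ⟨fun t ↦ ∫ s in a..t, q s, fun t ht ↦ ?_⟩
  have hqt : q t = p t := IccExtend_of_mem hab _ ht
  exact hqt ▸ (hq.integral_hasStrictDerivAt a t).hasDerivAt

theorem nonpos_left_of_mul_le_deriv {f f' p : ℝ → ℝ} {a b : ℝ} (hab : a ≤ b)
    (hp : ContinuousOn p (Icc a b)) (hf : ContinuousOn f (Icc a b))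
    (hf' : ∀ t ∈ Ioo a b, HasDerivAt f (f' t) t)
    (hle : ∀ t ∈ Ioo a b, p t * f t ≤ f' t) (hb : f b ≤ 0) : f a ≤ 0 := by
  obtain ⟨P, hP⟩ := exists_hasDerivAt_of_continuousOn_Icc hab hp
  have hcont : ContinuousOn (fun t ↦ exp (-P t) * f t) (Icc a b) :=
    (HasDerivAt.continuousOn hP).neg.rexp.mul hf
  have hderiv : ∀ t ∈ Ioo a b,
      HasDerivAt (fun t ↦ exp (-P t) * f t) (exp (-P t) * (f' t - p t * f t)) t := fun t ht ↦
    ((hP t (Ioo_subset_Icc_self ht)).fun_neg.exp.fun_mul (hf' t ht)).congr_deriv (by ring)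
  have hmono : MonotoneOn (fun t ↦ exp (-P t) * f t) (Icc a b) := by
    refine monotoneOn_of_hasDerivWithinAt_nonneg (convex_Icc a b) hcont
      (f' := fun t ↦ exp (-P t) * (f' t - p t * f t)) ?_ ?_ <;> rw [interior_Icc]
    · exact fun t ht ↦ (hderiv t ht).hasDerivWithinAt
    · exact fun t ht ↦ mul_nonneg (exp_pos _).le (sub_nonneg.2 (hle t ht))
  have hweighted : exp (-P a) * f a ≤ 0 := calc
    exp (-P a) * f a ≤ exp (-P b) * f b :=
      hmono (left_mem_Icc.2 hab) (right_mem_Icc.2 hab) hab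
    _ ≤ 0 := mul_nonpos_of_nonneg_of_nonpos (exp_pos _).le hb
  exact nonpos_of_mul_nonpos_right hweighted (exp_pos _)

theorem riccati_le_left_of_le_right {u v K L : ℝ → ℝ} {a b : ℝ} (hab : a ≤ b)
    (hu : ContinuousOn u (Icc a b)) (hv : ContinuousOn v (Icc a b))
    (hu' : ∀ t ∈ Ioo a b, HasDerivAt u (-(u t) ^ 2 - K t) t)
    (hv' : ∀ t ∈ Ioo a b, HasDerivAt v (-(v t) ^ 2 - L t) t)
    (hKL : ∀ t ∈ Ioo a b, K t ≤ L t) (hb : u b ≤ v b) : u a ≤ v a := by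
  refine sub_nonpos.1 <| nonpos_left_of_mul_le_deriv (f := fun t ↦ u t - v t)
    (p := fun t ↦ -(u t + v t)) hab (hu.add hv).neg (hu.sub hv)
    (fun t ht ↦ (hu' t ht).fun_sub (hv' t ht)) (fun t ht ↦ ?_) (sub_nonpos.2 hb)
  calc
    -(u t + v t) * (u t - v t) = -(u t) ^ 2 - -(v t) ^ 2 := by ring
    _ ≤ -(u t) ^ 2 - K t - (-(v t) ^ 2 - L t) := by linarith [hKL t ht]

theorem hasDerivAt_tanh (x : ℝ) : HasDerivAt tanh (1 - tanh x ^ 2) x := by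
  have hquot : HasDerivAt tanh ((cosh x * cosh x - sinh x * sinh x) / cosh x ^ 2) x :=
    ((hasDerivAt_sinh x).fun_div (hasDerivAt_cosh x) (cosh_pos x).ne').congr_of_eventuallyEq
      (.of_forall tanh_eq_sinh_div_cosh)
  refine hquot.congr_deriv ?_
  rw [tanh_eq_sinh_div_cosh]
  field_simp

theorem tanh_pos {x : ℝ} (hx : 0 < x) : 0 < tanh x := by
  rw [tanh_eq_sinh_div_cosh]
  exact div_pos (sinh_pos_iff.2 hx) (cosh_pos x)

theorem hasDerivAt_neg_mul_tanh_riccati (κ b t : ℝ) :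
    HasDerivAt (fun s ↦ -(κ * tanh (κ * (b - s))))
      (-(-(κ * tanh (κ * (b - t)))) ^ 2 - -κ ^ 2) t := by
  have harg : HasDerivAt (fun s ↦ κ * (b - s)) (κ * -1) t :=
    ((hasDerivAt_id t).const_sub b).const_mul κ
  exact (((hasDerivAt_tanh _).comp t harg).const_mul κ).fun_neg.congr_deriv (by ring)

theorem riccati_neg_curvature_bound_general {δ σ t₀ : ℝ} {u K : ℝ → ℝ} (hδ : 0 ≤ δ) (hσ : 0 ≤ σ)
    (hu : ContinuousOn u (Icc t₀ (t₀ + σ)))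
    (hu' : ∀ t ∈ Ioo t₀ (t₀ + σ), HasDerivAt u (-(u t) ^ 2 - K t) t)
    (hend : u (t₀ + σ) ≤ 0) (hK : ∀ t ∈ Ioo t₀ (t₀ + σ), K t ≤ -δ) :
    u t₀ ≤ -(√δ * tanh (√δ * σ)) := by
  have hv' (t : ℝ) := hasDerivAt_neg_mul_tanh_riccati √δ (t₀ + σ) t
  simp only [sq_sqrt hδ] at hv'
  simpa using riccati_le_left_of_le_right (L := fun _ ↦ -δ) (le_add_of_nonneg_right hσ) hu
    (HasDerivAt.continuousOn fun t _ ↦ hv' t) hu' (fun t _ ↦ hv' t) hK (by simpa using hend)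

/-- Quantitative Riccati estimate: if the curvature is at most `−δ` on a time
interval of length `σ` and the Riccati solution is nonpositive there, then at
the beginning of the interval the solution is at most `−c`, where `c > 0`
depends only on `δ` and `σ`. -/
theorem riccati_neg_curvature_bound
    (δ σ : ℝ) (hδ : 0 < δ) (hσ : 0 < σ) :
    ∃ c : ℝ, 0 < c ∧
      ∀ (t₀ : ℝ) (u K : ℝ → ℝ),
        (∀ t ∈ Icc t₀ (t₀ + σ), HasDerivAt u (-(u t) ^ 2 - K t) t) →
        (∀ t ∈ Icc t₀ (t₀ + σ), u t ≤ 0) →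
        (∀ t ∈ Icc t₀ (t₀ + σ), K t ≤ -δ) →
        u t₀ ≤ -c := by
  have hδ' : 0 < √δ := sqrt_pos.2 hδ
  refine ⟨√δ * tanh (√δ * σ), mul_pos hδ' (tanh_pos (mul_pos hδ' hσ)), ?_⟩
  intro t₀ u K hu hneg hK
  exact riccati_neg_curvature_bound_general hδ.le hσ.le (HasDerivAt.continuousOn hu)
    (fun t ht ↦ hu t (Ioo_subset_Icc_self ht)) (hneg _ (right_mem_Icc.2 (by linarith)))
    fun t ht ↦ hK t (Ioo_subset_Icc_self ht)
end

section
/- Let δ > 0, let a < b be real numbers, let u : ℝ → ℝ be differentiable on [a,b], and let K : ℝ → ℝ satisfy u'(t) = −u(t)² − K(t) for all t ∈ [a,b]. Suppose u(t) ≤ 0 for all t ∈ [a,b], K(t) ≤ −δ for all t ∈ [a,b], and u(a)² < δ. Then u is strictly monotonically increasing on [a,b]. -/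
open Set

/-!
Since `K ≤ -δ`, the Riccati equation gives `u' ≥ δ - u²`, which is positive as long as `u` stays in
`(-√δ, √δ)`. As `u a > -√δ`, the initial value is a barrier: `u` has positive derivative whenever it
equals `u a`, so it never drops below `u a` and hence never leaves this interval from below.
-/

section Barrier

variable {a b : ℝ} {f f' : ℝ → ℝ}

theorem le_image_of_hasDerivWithinAt_pos_of_eq {c : ℝ}
    (hderiv : ∀ t ∈ Icc a b, HasDerivWithinAt f (f' t) (Icc a b) t)
    (hinit : c ≤ f a) (hpos : ∀ t ∈ Ico a b, f t = c → 0 < f' t) {t : ℝ} (ht : t ∈ Icc a b) :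
    c ≤ f t :=
  image_le_of_deriv_right_lt_deriv_boundary' (f := fun _ => c) (f' := fun _ => 0)
    continuousOn_const (fun t _ => hasDerivWithinAt_const t _ c) hinit
    (fun t ht => (hderiv t ht).continuousWithinAt)
    (fun t ht => (hderiv t (Ico_subset_Icc_self ht)).mono_of_mem_nhdsWithin
      (Icc_mem_nhdsGE_of_mem ht))
    (fun t ht heq => hpos t ht heq.symm) ht

theorem strictMonoOn_Icc_of_hasDerivWithinAt_pos_of_left_le
    (hderiv : ∀ t ∈ Icc a b, HasDerivWithinAt f (f' t) (Icc a b) t)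
    (hpos : ∀ t ∈ Ico a b, f a ≤ f t → 0 < f' t) :
    StrictMonoOn f (Icc a b) := by
  have hbarrier : ∀ t ∈ Icc a b, f a ≤ f t := fun t ht =>
    le_image_of_hasDerivWithinAt_pos_of_eq hderiv le_rfl
      (fun s hs heq => hpos s hs heq.ge) ht
  refine strictMonoOn_of_hasDerivWithinAt_pos (convex_Icc a b)
    (fun t ht => (hderiv t ht).continuousWithinAt)
    (fun t ht => (hderiv t (interior_subset ht)).mono interior_subset) fun t ht => ?_
  rw [interior_Icc] at ht
  exact hpos t (Ioo_subset_Ico_self ht) (hbarrier t (Ioo_subset_Icc_self ht))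

end Barrier

theorem riccati_strictMonoOn_general {δ a b : ℝ} {u K : ℝ → ℝ}
    (hderiv : ∀ t ∈ Icc a b, HasDerivWithinAt u (-(u t) ^ 2 - K t) (Icc a b) t)
    (hu : ∀ t ∈ Ico a b, u t < √δ)
    (hK : ∀ t ∈ Ico a b, K t ≤ -δ)
    (hini : -√δ < u a) :
    StrictMonoOn u (Icc a b) := by
  refine strictMonoOn_Icc_of_hasDerivWithinAt_pos_of_left_le hderiv fun t ht hle => ?_
  have hsq : u t ^ 2 < δ := Real.sq_lt.mpr ⟨hini.trans_le hle, hu t ht⟩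
  linarith [hK t ht]

/-- On an interval where the curvature is at most `−δ`, a nonpositive Riccati
solution starting with `u(a)² < δ` is strictly increasing. -/
theorem riccati_strictMonoOn
    (δ : ℝ) (hδ : 0 < δ) (a b : ℝ) (hab : a < b)
    (u K : ℝ → ℝ)
    (hderiv : ∀ t ∈ Icc a b, HasDerivAt u (-(u t) ^ 2 - K t) t)
    (hu : ∀ t ∈ Icc a b, u t ≤ 0)
    (hK : ∀ t ∈ Icc a b, K t ≤ -δ)
    (hini : (u a) ^ 2 < δ) :
    StrictMonoOn u (Icc a b) :=
  riccati_strictMonoOn_general (fun t ht => (hderiv t ht).hasDerivWithinAt)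
    (fun t ht => (hu t (Ico_subset_Icc_self ht)).trans_lt (Real.sqrt_pos.mpr hδ))
    (fun t ht => hK t (Ico_subset_Icc_self ht)) (Real.sq_lt.mp hini).1
end

section
/- Let u : ℝ → ℝ be differentiable and let K : ℝ → ℝ satisfy u'(t) = −u(t)² − K(t) for all t ∈ ℝ. Suppose u(t) ≤ 0 for all t ∈ ℝ, K(t) ≥ 0 for all t ∈ ℝ, and there is a constant a > 0 with |u(t)| ≤ a for all t ∈ ℝ. Then u(t) = 0 and K(t) = 0 for all t ∈ ℝ. -/
/-!
Where a function `u` with `u' ≤ -u²` does not vanish, `(1/u)' = -u'/u² ≥ 1`. If `u` is negative at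
some time, then it stays negative from then on, while `1/u` reaches `0` in finite time, which is
impossible. Reversing time, a positive value is impossible as well. So `u = 0`, and then
`K = -u' - u² = 0`.
-/

open Set

section RiccatiInequality

variable {u : ℝ → ℝ} {t₀ : ℝ}

theorem sub_le_inv_sub_inv_of_deriv_le_neg_sq {D : Set ℝ} (hD : Convex ℝ D)
    (hcont : ContinuousOn u D) (hdiff : DifferentiableOn ℝ u (interior D))
    (hderiv : ∀ t ∈ interior D, deriv u t ≤ -u t ^ 2) (hne : ∀ t ∈ D, u t ≠ 0)
    {s t : ℝ} (hs : s ∈ D) (ht : t ∈ D) (hst : s ≤ t) :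
    t - s ≤ (u t)⁻¹ - (u s)⁻¹ := by
  have hne' : ∀ r ∈ interior D, u r ≠ 0 := fun r hr => hne r (interior_subset hr)
  have hinv : ∀ r ∈ interior D, HasDerivAt u⁻¹ (-deriv u r / u r ^ 2) r := fun r hr =>
    (hdiff.differentiableAt (isOpen_interior.mem_nhds hr)).hasDerivAt.inv (hne' r hr)
  have one_le_deriv_inv : ∀ r ∈ interior D, 1 ≤ deriv u⁻¹ r := fun r hr => by
    rw [(hinv r hr).deriv, one_le_div (sq_pos_of_ne_zero (hne' r hr))]
    exact le_neg_of_le_neg (hderiv r hr)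
  simpa only [one_mul, Pi.inv_apply] using
    hD.mul_sub_le_image_sub_of_le_deriv (hcont.inv₀ hne)
      (fun r hr => (hinv r hr).differentiableAt.differentiableWithinAt)
      one_le_deriv_inv s hs t ht hst

theorem nonneg_of_deriv_le_neg_sq_on_Ioi (hcont : ContinuousOn u (Ici t₀))
    (hdiff : DifferentiableOn ℝ u (Ioi t₀)) (hderiv : ∀ t ∈ Ioi t₀, deriv u t ≤ -u t ^ 2) :
    0 ≤ u t₀ := by
  by_contra! hneg
  rw [← interior_Ici] at hdiff hderiv
  have hanti : AntitoneOn u (Ici t₀) :=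
    antitoneOn_of_deriv_nonpos (convex_Ici t₀) hcont hdiff fun t ht =>
      (hderiv t ht).trans (neg_nonpos.2 (sq_nonneg (u t)))
  have u_neg : ∀ t ∈ Ici t₀, u t < 0 := fun t ht => (hanti self_mem_Ici ht ht).trans_lt hneg
  -- Comparison with `1 / (t - t₀ + 1 / u t₀)` predicts blow-up no later than `t₀ - 1 / u t₀`.
  have ht₁ : t₀ ≤ t₀ - (u t₀)⁻¹ := by linarith [inv_lt_zero.2 hneg]
  have hgrowth := sub_le_inv_sub_inv_of_deriv_le_neg_sq (convex_Ici t₀) hcont hdiff hderiv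
    (fun t ht => (u_neg t ht).ne) self_mem_Ici ht₁ ht₁
  linarith [inv_lt_zero.2 (u_neg _ ht₁)]

theorem nonpos_of_deriv_le_neg_sq_on_Iio (hcont : ContinuousOn u (Iic t₀))
    (hdiff : DifferentiableOn ℝ u (Iio t₀)) (hderiv : ∀ t ∈ Iio t₀, deriv u t ≤ -u t ^ 2) :
    u t₀ ≤ 0 := by
  -- The differential inequality is invariant under `u ↦ (t ↦ -u (-t))`.
  have hreflect : 0 ≤ -u (- -t₀) := by
    refine nonneg_of_deriv_le_neg_sq_on_Ioi (u := fun t => -u (-t)) (t₀ := -t₀) ?_ ?_ ?_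
    · exact (hcont.comp continuousOn_neg fun t ht => neg_le.1 (mem_Ici.1 ht)).neg
    · exact (hdiff.comp (differentiableOn_neg _) fun t ht => neg_lt.1 (mem_Ioi.1 ht)).neg
    · intro t ht
      simpa only [deriv.fun_neg, deriv_comp_neg, neg_neg, neg_sq] using
        hderiv (-t) (neg_lt.1 (mem_Ioi.1 ht))
  simpa only [neg_neg, neg_nonneg] using hreflect

theorem eq_zero_of_deriv_le_neg_sq (hdiff : Differentiable ℝ u)
    (hderiv : ∀ t, deriv u t ≤ -u t ^ 2) : u = 0 :=
  funext fun _ => le_antisymm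
    (nonpos_of_deriv_le_neg_sq_on_Iio hdiff.continuous.continuousOn hdiff.differentiableOn
      fun t _ => hderiv t)
    (nonneg_of_deriv_le_neg_sq_on_Ioi hdiff.continuous.continuousOn hdiff.differentiableOn
      fun t _ => hderiv t)

end RiccatiInequality

theorem riccati_rigidity_general {u K : ℝ → ℝ}
    (hderiv : ∀ t, HasDerivAt u (-(u t) ^ 2 - K t) t) (hK : ∀ t, 0 ≤ K t) :
    ∀ t, u t = 0 ∧ K t = 0 := by
  have hu : u = 0 := eq_zero_of_deriv_le_neg_sq (fun t => (hderiv t).differentiableAt) fun t =>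
    (hderiv t).deriv.trans_le (sub_le_self _ (hK t))
  subst hu
  intro t
  have hderiv_zero : -(0 : ℝ) ^ 2 - K t = 0 := (hderiv t).unique (hasDerivAt_const t 0)
  exact ⟨rfl, by linarith⟩

/-- Rigidity for the Riccati equation: a bounded nonpositive solution of
`u' = −u² − K` with `K ≥ 0` everywhere must vanish identically, and then
`K` vanishes identically as well. -/
theorem riccati_rigidity
    (u K : ℝ → ℝ)
    (hderiv : ∀ t : ℝ, HasDerivAt u (-(u t) ^ 2 - K t) t)
    (hu : ∀ t : ℝ, u t ≤ 0)
    (hK : ∀ t : ℝ, 0 ≤ K t)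
    (a : ℝ) (ha : 0 < a)
    (hbound : ∀ t : ℝ, |u t| ≤ a) :
    ∀ t : ℝ, u t = 0 ∧ K t = 0 :=
  riccati_rigidity_general hderiv hK
end

section
/- Let X be a metric space and let φ : ℝ × X → X be a continuous flow on X (φ(0,x) = x and φ(s, φ(t,x)) = φ(s+t, x) for all s,t ∈ ℝ, x ∈ X; write φ_t(x) = φ(t,x)). Let ε₀ > 0, let (p_k) and (q_k) be sequences in X, and let (s_k) be a sequence of real numbers with s_k → +∞ such that for every k: d(φ_{s_k}(p_k), φ_{s_k}(q_k)) = ε₀ and d(φ_s(p_k), φ_s(q_k)) ≤ ε₀ for all s ∈ [0, s_k]. Suppose φ_{s_k}(p_k) → a and φ_{s_k}(q_k) → b as k → ∞. Then d(a,b) = ε₀ and d(φ_t(a), φ_t(b)) ≤ ε₀ for every t ≤ 0. -/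
open Filter Set

/-!
A pair of orbits is one orbit of the product flow on `X × X`, and `{z | dist z.1 z.2 ≤ ε₀}` is a
closed subset of `X × X`. Measured from time `s k`, the interval `[0, s k]` becomes `[-s k, 0]`;
these intervals exhaust the nonpositive times, so closedness passes the containment to the
backward orbit of the limit point.
-/

section BackwardOrbit

open scoped Topology

variable {ι T X : Type*} [AddGroup T] [Preorder T] [AddLeftMono T] [AddRightMono T]
  {l : Filter ι} [l.NeBot] {s : ι → T}

theorem backward_orbit_mem_of_isClosed [TopologicalSpace X] {S : Set X} (hS : IsClosed S)
    {φ : T → X → X} (hadd : ∀ s t x, φ s (φ t x) = φ (s + t) x) {x : ι → X}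
    (hs : Tendsto s l atTop) (hmem : ∀ᶠ k in l, ∀ t ∈ Icc 0 (s k), φ t (x k) ∈ S)
    {c : X} (hc : Tendsto (fun k => φ (s k) (x k)) l (𝓝 c))
    {t : T} (ht : t ≤ 0) (hcont : ContinuousAt (φ t) c) : φ t c ∈ S := by
  have hlim : Tendsto (fun k => φ (t + s k) (x k)) l (𝓝 (φ t c)) := by
    simpa only [Function.comp_def, hadd] using hcont.tendsto.comp hc
  refine hS.mem_of_tendsto hlim ?_
  filter_upwards [hmem, hs.eventually_ge_atTop (-t)] with k hk hts
  exact hk (t + s k) ⟨neg_le_iff_add_nonneg'.mp hts, add_le_of_nonpos_left ht⟩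

theorem flow_limit_backward_close_general [PseudoMetricSpace X] {φ : T → X → X}
    (hcont : ∀ t, Continuous (φ t)) (hadd : ∀ s t x, φ s (φ t x) = φ (s + t) x)
    {ε₀ : ℝ} {p q : ι → X} (hs : Tendsto s l atTop)
    (hsep : ∀ᶠ k in l, dist (φ (s k) (p k)) (φ (s k) (q k)) = ε₀)
    (hclose : ∀ᶠ k in l, ∀ t ∈ Icc 0 (s k), dist (φ t (p k)) (φ t (q k)) ≤ ε₀)
    {a b : X} (hpa : Tendsto (fun k => φ (s k) (p k)) l (𝓝 a))
    (hqb : Tendsto (fun k => φ (s k) (q k)) l (𝓝 b)) :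
    dist a b = ε₀ ∧ ∀ t ≤ 0, dist (φ t a) (φ t b) ≤ ε₀ := by
  have hdist : Tendsto (fun k => dist (φ (s k) (p k)) (φ (s k) (q k))) l (𝓝 ε₀) :=
    tendsto_nhds_of_eventually_eq hsep
  have hclosed : IsClosed {z : X × X | dist z.1 z.2 ≤ ε₀} :=
    isClosed_le continuous_dist continuous_const
  refine ⟨tendsto_nhds_unique (hpa.dist hqb) hdist, fun t ht => ?_⟩
  exact backward_orbit_mem_of_isClosed hclosed (φ := fun t => Prod.map (φ t) (φ t))
    (x := fun k => (p k, q k)) (c := (a, b)) (fun s t z => Prod.ext (hadd s t z.1) (hadd s t z.2))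
    hs hclose (hpa.prodMk_nhds hqb) ht ((hcont t).prodMap (hcont t)).continuousAt

end BackwardOrbit

/-- Limits of pairs of orbit segments that stay `ε₀`-close for longer and
longer times and first separate to distance exactly `ε₀` give points `a, b`
at distance exactly `ε₀` whose backward orbits remain within distance `ε₀`. -/
theorem flow_limit_backward_close
    {X : Type*} [MetricSpace X]
    (φ : ℝ → X → X)
    (hcont : Continuous fun p : ℝ × X => φ p.1 p.2)
    (h0 : ∀ x, φ 0 x = x)
    (hadd : ∀ s t x, φ s (φ t x) = φ (s + t) x)
    (ε₀ : ℝ) (hε₀ : 0 < ε₀)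
    (p q : ℕ → X) (s : ℕ → ℝ)
    (hs : Tendsto s atTop atTop)
    (hsep : ∀ k, dist (φ (s k) (p k)) (φ (s k) (q k)) = ε₀)
    (hclose : ∀ k, ∀ t ∈ Icc (0:ℝ) (s k), dist (φ t (p k)) (φ t (q k)) ≤ ε₀)
    (a b : X)
    (hpa : Tendsto (fun k => φ (s k) (p k)) atTop (nhds a))
    (hqb : Tendsto (fun k => φ (s k) (q k)) atTop (nhds b)) :
    dist a b = ε₀ ∧ ∀ t : ℝ, t ≤ 0 → dist (φ t a) (φ t b) ≤ ε₀ :=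
  flow_limit_backward_close_general (fun t => hcont.comp (Continuous.prodMk_right t)) hadd hs
    (.of_forall hsep) (.of_forall hclose) hpa hqb
end
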